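/- arXiv:1604.08271 — 2 statements merged into one kernel-verified Lean document; each statement's English description precedes it below -/
import Mathlib

section
/- Let S, S' ⊆ E, let R be a face of 𝒜_S and let R' be a face of 𝒜_{S'}. Then σ_{S',R'} is a nonempty exposed face of σ_{S,R} (in the sense of IsExposed ℝ) if and only if S' ⊆ S and R is contained in the topological closure of R'. (Face-relation part of Proposition 4.1.) -/
open Set Submodule

noncomputable section

variable {E : Type*} [Fintype E] [DecidableEq E]
variable {M : Type*} [NormedAddCommGroup M] [NormedSpace ℝ M] [FiniteDimensional ℝ M]

/-- The positive closed halfspace `H_e^+` of the hyperplane `H_e`. -/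
def Hplus (a : E → (M →ₗ[ℝ] ℝ)) (r : E → ℝ) (e : E) : Set M := {m | a e m + r e ≤ 0}

/-- The negative closed halfspace `H_e^-` of the hyperplane `H_e`. -/
def Hminus (a : E → (M →ₗ[ℝ] ℝ)) (r : E → ℝ) (e : E) : Set M := {m | 0 ≤ a e m + r e}

/-- `R` is a face of the localization `𝒜_S`: a nonempty fiber of the sign map
`M → SignType^S`, `m ↦ (sign (a e m + r e))_{e ∈ S}`. -/
def IsFace (a : E → (M →ₗ[ℝ] ℝ)) (r : E → ℝ) (S : Set E) (R : Set M) : Prop :=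
  ∃ m₀ : M, R = {m : M | ∀ e ∈ S, SignType.sign (a e m + r e) = SignType.sign (a e m₀ + r e)}

/-- `S^+(R)`: the elements `e ∈ S` with `R ⊆ H_e^+`. -/
def posSet (a : E → (M →ₗ[ℝ] ℝ)) (r : E → ℝ) (S : Set E) (R : Set M) : Set E :=
  {e ∈ S | R ⊆ Hplus a r e}

/-- `S^-(R)`: the elements `e ∈ S` with `R ⊆ H_e^-`. -/
def negSet (a : E → (M →ₗ[ℝ] ℝ)) (r : E → ℝ) (S : Set E) (R : Set M) : Set E :=
  {e ∈ S | R ⊆ Hminus a r e}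

/-- `S^0(R) = S^+(R) ∩ S^-(R)`. -/
def zeroSet (a : E → (M →ₗ[ℝ] ℝ)) (r : E → ℝ) (S : Set E) (R : Set M) : Set E :=
  posSet a r S R ∩ negSet a r S R

/-- The linear map `(E → ℝ) → N` sending the basis vector `δ_e` to `a_e`. -/
def toN (a : E → (M →ₗ[ℝ] ℝ)) : (E → ℝ) →ₗ[ℝ] (M →ₗ[ℝ] ℝ) :=
  Fintype.linearCombination ℝ a

/-- `Λ`, the kernel of `(E → ℝ) → N`. -/
def Lam (a : E → (M →ₗ[ℝ] ℝ)) : Submodule ℝ (E → ℝ) := LinearMap.ker (toN a)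

/-- The antidiagonal embedding `∇ : x ↦ (x, -x)`. -/
def nabla : (E → ℝ) →ₗ[ℝ] (E → ℝ) × (E → ℝ) :=
  LinearMap.prod LinearMap.id (-LinearMap.id)

/-- `∇(Λ)`. -/
def nabLam (a : E → (M →ₗ[ℝ] ℝ)) : Submodule ℝ ((E → ℝ) × (E → ℝ)) :=
  (Lam a).map nabla

/-- The Lawrence cocharacter space `Ñ = ((E → ℝ) × (E → ℝ))/∇(Λ)`. -/
abbrev tildeN (a : E → (M →ₗ[ℝ] ℝ)) : Type _ := ((E → ℝ) × (E → ℝ)) ⧸ nabLam a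

/-- `ρ_e^+`, the image of `(δ_e, 0)` in `Ñ`. -/
def rhoP (a : E → (M →ₗ[ℝ] ℝ)) (e : E) : tildeN a :=
  Submodule.Quotient.mk (Pi.single e 1, 0)

/-- `ρ_e^-`, the image of `(0, δ_e)` in `Ñ`. -/
def rhoM (a : E → (M →ₗ[ℝ] ℝ)) (e : E) : tildeN a :=
  Submodule.Quotient.mk (0, Pi.single e 1)

/-- The cone `σ_{S,R} ⊆ Ñ` generated by `{ρ_e^+ : e ∈ S^+(R)} ∪ {ρ_f^- : f ∈ S^-(R)}`
together with `0`: the set of all nonnegative linear combinations of these generators. -/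
def sigmaCone (a : E → (M →ₗ[ℝ] ℝ)) (r : E → ℝ) (S : Set E) (R : Set M) : Set (tildeN a) :=
  {v | ∃ c d : E → ℝ, (∀ e, 0 ≤ c e) ∧ (∀ e, 0 ≤ d e) ∧
    v = ∑ e, (posSet a r S R).indicator c e • rhoP a e
      + ∑ e, (negSet a r S R).indicator d e • rhoM a e}

/-! Write `u_e(m) = a_e(m) + r_e`. For points `x`, `y` of `M` and any `δ : E → ℝ`, the assignment
`ρ_e^± ↦ u_e(x)^± - u_e(y)^± - δ_e` extends to a linear functional on `Ñ`, because its values on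
`ρ_e^+` and `ρ_e^-` differ by `a_e(x - y)`. If `x ∈ R` and `δ ≥ 0` on `S`, it is nonpositive on
`σ_{S,R}`, since `u_e(x)^± = 0` whenever `e ∈ S^±(R)`.

Evaluated on the generators of `σ_{S',R'}`, these functionals show that `σ_{S',R'} ⊆ σ_{S,R}` forces
`S'^±(R') ⊆ S^±(R)`. Conversely, under these inclusions, taking `x ∈ R`, `y ∈ R'` and `δ` the
indicator of the complement of `S'` gives a functional that vanishes on exactly those generators of
`σ_{S,R}` that belong to `σ_{S',R'}`. The inclusions say that `S' ⊆ S` and that the points of `R`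
satisfy the weak inequalities of `R'`; the latter amounts to `R ⊆ closure R'`, because the open
segment from such a point to a point of `R'` lies in `R'`. -/

section PointedCone

variable {𝕜 V : Type*} [Semiring 𝕜] [PartialOrder 𝕜] [IsOrderedRing 𝕜] [AddCommMonoid V]
  [Module 𝕜 V]

theorem mem_hull_image_iff_exists_indicator {ι : Type*} [Fintype ι] {v : ι → V} {s : Set ι}
    {x : V} :
    x ∈ PointedCone.hull 𝕜 (v '' s) ↔
      ∃ c : ι → 𝕜, (∀ i, 0 ≤ c i) ∧ x = ∑ i, s.indicator c i • v i := by
  constructor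
  · intro hx
    obtain ⟨c, hc, rfl⟩ := (Finsupp.mem_span_image_iff_linearCombination _).1 hx
    refine ⟨fun i => c i, fun i => (c i).2, ?_⟩
    have hcs : s.indicator (fun i => (c i : 𝕜)) = fun i => (c i : 𝕜) :=
      indicator_eq_self.2 fun i hi => hc (Finsupp.mem_support_iff.2 fun h => hi (by simp [h]))
    rw [hcs, Finsupp.linearCombination_apply, Finsupp.sum_fintype _ _ fun i => zero_smul _ (v i)]
    rfl
  · rintro ⟨c, hc, rfl⟩
    refine Submodule.sum_mem _ fun i _ => ?_
    by_cases hi : i ∈ s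
    · rw [indicator_of_mem hi]
      exact Submodule.smul_mem _ (⟨c i, hc i⟩ : {c : 𝕜 // 0 ≤ c})
        (PointedCone.subset_hull (mem_image_of_mem v hi))
    · rw [indicator_of_notMem hi, zero_smul]
      exact zero_mem _

theorem map_nonpos_of_mem_hull {l : V →ₗ[𝕜] 𝕜} {s : Set V} (hs : ∀ x ∈ s, l x ≤ 0) {x : V}
    (hx : x ∈ PointedCone.hull 𝕜 s) : l x ≤ 0 := by
  induction hx using span_induction with
  | mem x hx => exact hs x hx
  | zero => exact (map_zero l).le
  | add x y _ _ hx hy => exact (map_add l x y).trans_le (add_nonpos hx hy)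
  | smul c x _ hx =>
    exact (map_smul l (c : 𝕜) x).trans_le (mul_nonpos_of_nonneg_of_nonpos c.2 hx)

theorem mem_hull_sep_of_map_eq_zero [NoZeroDivisors 𝕜] {l : V →ₗ[𝕜] 𝕜} {s : Set V}
    (hs : ∀ x ∈ s, l x ≤ 0) {x : V} (hx : x ∈ PointedCone.hull 𝕜 s) (hlx : l x = 0) :
    x ∈ PointedCone.hull 𝕜 {y ∈ s | l y = 0} := by
  induction hx using span_induction with
  | mem x hx => exact PointedCone.subset_hull ⟨hx, hlx⟩
  | zero => exact zero_mem _
  | add x y hx hy ihx ihy =>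
    have hlx_le := map_nonpos_of_mem_hull hs hx
    have hly_le := map_nonpos_of_mem_hull hs hy
    have hadd : 0 ≤ l x + l y := ((map_add l x y).symm.trans hlx).ge
    exact add_mem (ihx (eq_zero_of_add_nonneg_left hlx_le hly_le hadd))
      (ihy (eq_zero_of_add_nonneg_right hlx_le hly_le hadd))
  | smul c x _ ih =>
    obtain hc | hx := mul_eq_zero.1 ((map_smul l (c : 𝕜) x).symm.trans hlx)
    · rw [Subtype.ext (a2 := (0 : {c : 𝕜 // 0 ≤ c})) hc, zero_smul]
      exact zero_mem _
    · exact Submodule.smul_mem _ c (ih hx)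

theorem isExposed_hull_sep_eq_zero [NoZeroDivisors 𝕜] [TopologicalSpace 𝕜] [TopologicalSpace V]
    {l : StrongDual 𝕜 V} {s : Set V} (hs : ∀ x ∈ s, l x ≤ 0) :
    IsExposed 𝕜 (PointedCone.hull 𝕜 s : Set V) (PointedCone.hull 𝕜 {x ∈ s | l x = 0}) := by
  have hl : ∀ y ∈ PointedCone.hull 𝕜 s, l y ≤ 0 := fun y hy =>
    map_nonpos_of_mem_hull (l := l.toLinearMap) hs hy
  have hker : PointedCone.hull 𝕜 {x ∈ s | l x = 0} ≤ l.toLinearMap.ker.restrictScalars _ :=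
    span_le.2 fun x hx => hx.2
  refine fun _ => ⟨l, Subset.antisymm (fun x hx => ⟨span_mono (sep_subset _ _) hx, fun y hy => ?_⟩)
    fun x ⟨hx, hmax⟩ => ?_⟩
  · exact (hl y hy).trans_eq (hker hx).symm
  · have hlx : l x = 0 := (hl x hx).antisymm ((map_zero l).ge.trans (hmax 0 (zero_mem _)))
    exact mem_hull_sep_of_map_eq_zero (l := l.toLinearMap) hs hx hlx

end PointedCone

theorem sign_add_eq_right {α : Type*} [AddCommMonoid α] [LinearOrder α]
    [IsOrderedCancelAddMonoid α]
    {u v : α} (hneg : v ≤ 0 → u ≤ 0) (hpos : 0 ≤ v → 0 ≤ u) :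
    SignType.sign (u + v) = SignType.sign v := by
  obtain hv | rfl | hv := lt_trichotomy v 0
  · rw [sign_neg hv, sign_neg (add_neg_of_nonpos_of_neg (hneg hv.le) hv)]
  · rw [(hneg le_rfl).antisymm (hpos le_rfl), add_zero]
  · rw [sign_pos hv, sign_pos (add_pos_of_nonneg_of_pos (hpos hv.le) hv)]

theorem add_indicator_compl_nonpos_iff {ι α : Type*} [Semiring α] [LinearOrder α]
    [IsStrictOrderedRing α] {s : Set ι} {i : ι} {w : α} (hw : 0 ≤ w) :
    w + sᶜ.indicator 1 i ≤ 0 ↔ i ∈ s ∧ w = 0 := by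
  by_cases hi : i ∈ s
  · simp [hi, hw.ge_iff_eq']
  · simp [hi, (add_pos_of_nonneg_of_pos hw one_pos).not_ge]

section Arrangement

variable {a : E → (M →ₗ[ℝ] ℝ)} {r : E → ℝ} {S S' : Set E} {R R' : Set M}

section Faces

omit [Fintype E] [DecidableEq E] [FiniteDimensional ℝ M]

namespace IsFace

theorem nonempty (hR : IsFace a r S R) : R.Nonempty := by
  obtain ⟨m, rfl⟩ := hR
  exact ⟨m, fun _ _ => rfl⟩

theorem mem_iff (hR : IsFace a r S R) {m x : M} (hm : m ∈ R) :
    x ∈ R ↔ ∀ e ∈ S, SignType.sign (a e x + r e) = SignType.sign (a e m + r e) := by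
  obtain ⟨m₀, rfl⟩ := hR
  exact forall₂_congr fun e he => by rw [hm e he]

theorem mem_posSet_iff (hR : IsFace a r S R) {m : M} (hm : m ∈ R) {e : E} :
    e ∈ posSet a r S R ↔ e ∈ S ∧ a e m + r e ≤ 0 := by
  refine ⟨fun he => ⟨he.1, he.2 hm⟩, fun ⟨he, hme⟩ => ⟨he, fun x hx => ?_⟩⟩
  have hsign := (hR.mem_iff hm).1 hx e he
  exact sign_nonpos_iff.1 (hsign ▸ sign_nonpos_iff.2 hme)

theorem mem_negSet_iff (hR : IsFace a r S R) {m : M} (hm : m ∈ R) {e : E} :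
    e ∈ negSet a r S R ↔ e ∈ S ∧ 0 ≤ a e m + r e := by
  refine ⟨fun he => ⟨he.1, he.2 hm⟩, fun ⟨he, hme⟩ => ⟨he, fun x hx => ?_⟩⟩
  have hsign := (hR.mem_iff hm).1 hx e he
  exact sign_nonneg_iff.1 (hsign ▸ sign_nonneg_iff.2 hme)

theorem subset_posSet_union_negSet (hR : IsFace a r S R) :
    S ⊆ posSet a r S R ∪ negSet a r S R := by
  obtain ⟨m, hm⟩ := hR.nonempty
  exact fun e he => (le_total (a e m + r e) 0).imp
    (fun h => (hR.mem_posSet_iff hm).2 ⟨he, h⟩) fun h => (hR.mem_negSet_iff hm).2 ⟨he, h⟩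

theorem openSegment_subset (hR : IsFace a r S R) {m x : M} (hm : m ∈ R)
    (hpos : ∀ e ∈ posSet a r S R, x ∈ Hplus a r e)
    (hneg : ∀ e ∈ negSet a r S R, x ∈ Hminus a r e) : openSegment ℝ x m ⊆ R := by
  rintro _ ⟨s, t, hs, ht, hst, rfl⟩
  refine (hR.mem_iff hm).2 fun e he => ?_
  have hsign : SignType.sign (s * (a e x + r e) + t * (a e m + r e)) =
      SignType.sign (t * (a e m + r e)) :=
    sign_add_eq_right
      (fun h => mul_nonpos_of_nonneg_of_nonpos hs.le
        (hpos e ((hR.mem_posSet_iff hm).2 ⟨he, nonpos_of_mul_nonpos_right h ht⟩)))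
      (fun h => mul_nonneg hs.le
        (hneg e ((hR.mem_negSet_iff hm).2 ⟨he, nonneg_of_mul_nonneg_right h ht⟩)))
  calc SignType.sign (a e (s • x + t • m) + r e)
      = SignType.sign (s * (a e x + r e) + t * (a e m + r e)) := by
        congr 1
        simp only [map_add, map_smul, smul_eq_mul]
        linear_combination (-r e) * hst
    _ = SignType.sign (a e m + r e) := by rw [hsign, sign_mul, sign_pos ht, one_mul]

theorem subset_closure (hR' : IsFace a r S' R') (hpos : posSet a r S' R' ⊆ posSet a r S R)
    (hneg : negSet a r S' R' ⊆ negSet a r S R) : R ⊆ closure R' := by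
  obtain ⟨m, hm⟩ := hR'.nonempty
  intro x hx
  have hsegment : openSegment ℝ x m ⊆ R' :=
    hR'.openSegment_subset hm (fun e he => (hpos he).2 hx) fun e he => (hneg he).2 hx
  exact closure_mono hsegment (segment_subset_closure_openSegment (left_mem_segment ℝ x m))

end IsFace

theorem posSet_subset_of_subset_closure (ha : ∀ e, Continuous (a e)) (hS : S' ⊆ S)
    (hR : R ⊆ closure R') : posSet a r S' R' ⊆ posSet a r S R := fun e he =>
  ⟨hS he.1, hR.trans (closure_minimal he.2
    (isClosed_le ((ha e).add continuous_const) continuous_const))⟩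

theorem negSet_subset_of_subset_closure (ha : ∀ e, Continuous (a e)) (hS : S' ⊆ S)
    (hR : R ⊆ closure R') : negSet a r S' R' ⊆ negSet a r S R := fun e he =>
  ⟨hS he.1, hR.trans (closure_minimal he.2
    (isClosed_le continuous_const ((ha e).add continuous_const)))⟩

theorem IsFace.subset_and_subset_closure_iff (ha : ∀ e, Continuous (a e))
    (hR' : IsFace a r S' R') :
    S' ⊆ S ∧ R ⊆ closure R' ↔
      posSet a r S' R' ⊆ posSet a r S R ∧ negSet a r S' R' ⊆ negSet a r S R := by
  refine ⟨fun ⟨hS, hcl⟩ => ⟨posSet_subset_of_subset_closure ha hS hcl,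
    negSet_subset_of_subset_closure ha hS hcl⟩,
    fun ⟨hpos, hneg⟩ => ⟨fun e he => ?_, hR'.subset_closure hpos hneg⟩⟩
  exact (hR'.subset_posSet_union_negSet he).elim (fun h => (hpos h).1) fun h => (hneg h).1

end Faces

section Cones

omit [FiniteDimensional ℝ M]

theorem sigmaCone_eq_hull :
    sigmaCone a r S R = (PointedCone.hull ℝ
      (rhoP a '' posSet a r S R ∪ rhoM a '' negSet a r S R) : Set (tildeN a)) := by
  ext v
  rw [SetLike.mem_coe, PointedCone.hull, span_union, mem_sup]
  simp only [mem_hull_image_iff_exists_indicator]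
  constructor
  · rintro ⟨c, d, hc, hd, rfl⟩
    exact ⟨_, ⟨c, hc, rfl⟩, _, ⟨d, hd, rfl⟩, rfl⟩
  · rintro ⟨_, ⟨c, hc, rfl⟩, _, ⟨d, hd, rfl⟩, rfl⟩
    exact ⟨c, d, hc, hd, rfl⟩

theorem zero_mem_sigmaCone : (0 : tildeN a) ∈ sigmaCone a r S R := by
  rw [sigmaCone_eq_hull]
  exact zero_mem _

theorem rhoP_mem_sigmaCone {e : E} (he : e ∈ posSet a r S R) : rhoP a e ∈ sigmaCone a r S R := by
  rw [sigmaCone_eq_hull]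
  exact PointedCone.subset_hull (Or.inl (mem_image_of_mem _ he))

theorem rhoM_mem_sigmaCone {e : E} (he : e ∈ negSet a r S R) : rhoM a e ∈ sigmaCone a r S R := by
  rw [sigmaCone_eq_hull]
  exact PointedCone.subset_hull (Or.inr (mem_image_of_mem _ he))

theorem exists_strongDual_tildeN {p q : E → ℝ} {t : M} (hpq : ∀ e, p e - q e = a e t) :
    ∃ l : StrongDual ℝ (tildeN a), (∀ e, l (rhoP a e) = p e) ∧ ∀ e, l (rhoM a e) = q e := by
  let f : (E → ℝ) × (E → ℝ) →L[ℝ] ℝ := LinearMap.toContinuousLinearMap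
    ((Fintype.linearCombination ℝ p).coprod (Fintype.linearCombination ℝ q))
  have hf : nabLam a ≤ f.ker := by
    rintro _ ⟨x, hx, rfl⟩
    calc f (nabla x) = ∑ e, x e * (p e - q e) := by
          simp [f, nabla, Fintype.linearCombination_apply, mul_sub, ← sub_eq_add_neg]
      _ = toN a x t := by simp [toN, Fintype.linearCombination_apply, hpq]
      _ = 0 := by rw [LinearMap.mem_ker.1 hx, LinearMap.zero_apply]
  refine ⟨(nabLam a).liftQL f hf, fun e => ?_, fun e => ?_⟩
  · change f (Pi.single e 1, 0) = p e
    simp [f]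
  · change f (0, Pi.single e 1) = q e
    simp [f]

variable (a r) in
theorem exists_strongDual_posPart_sub_posPart (x y : M) (δ : E → ℝ) :
    ∃ l : StrongDual ℝ (tildeN a),
      (∀ e, l (rhoP a e) = (a e x + r e)⁺ - (a e y + r e)⁺ - δ e) ∧
      ∀ e, l (rhoM a e) = (a e x + r e)⁻ - (a e y + r e)⁻ - δ e := by
  refine exists_strongDual_tildeN (t := x - y) fun e => ?_
  rw [map_sub]
  linear_combination posPart_sub_negPart (a e x + r e) - posPart_sub_negPart (a e y + r e)

theorem map_nonpos_of_mem_sigmaCone {l : StrongDual ℝ (tildeN a)}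
    (hpos : ∀ e ∈ posSet a r S R, l (rhoP a e) ≤ 0)
    (hneg : ∀ e ∈ negSet a r S R, l (rhoM a e) ≤ 0) {v : tildeN a}
    (hv : v ∈ sigmaCone a r S R) : l v ≤ 0 := by
  rw [sigmaCone_eq_hull] at hv
  refine map_nonpos_of_mem_hull (l := l.toLinearMap) ?_ hv
  rintro _ (⟨e, he, rfl⟩ | ⟨e, he, rfl⟩)
  exacts [hpos e he, hneg e he]

variable (a r S) in
theorem exists_strongDual_nonpos_on_sigmaCone {x : M} (hx : x ∈ R) (y : M) {δ : E → ℝ}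
    (hδ : ∀ e ∈ S, 0 ≤ δ e) :
    ∃ l : StrongDual ℝ (tildeN a), (∀ v ∈ sigmaCone a r S R, l v ≤ 0) ∧
      (∀ e, l (rhoP a e) = (a e x + r e)⁺ - (a e y + r e)⁺ - δ e) ∧
      ∀ e, l (rhoM a e) = (a e x + r e)⁻ - (a e y + r e)⁻ - δ e := by
  obtain ⟨l, hlP, hlM⟩ := exists_strongDual_posPart_sub_posPart a r x y δ
  refine ⟨l, fun v hv => map_nonpos_of_mem_sigmaCone (fun e he => ?_) (fun e he => ?_) hv, hlP, hlM⟩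
  · rw [hlP, posPart_eq_zero.2 (he.2 hx)]
    linarith [posPart_nonneg (a e y + r e), hδ e he.1]
  · rw [hlM, negPart_eq_zero.2 (he.2 hx)]
    linarith [negPart_nonneg (a e y + r e), hδ e he.1]

theorem posSet_subset_of_sigmaCone_subset (hR : R.Nonempty) (hR' : R'.Nonempty)
    (h : sigmaCone a r S' R' ⊆ sigmaCone a r S R) : posSet a r S' R' ⊆ posSet a r S R := by
  intro e he
  obtain ⟨y, hy⟩ := hR'
  suffices H : ∀ x ∈ R, e ∈ S ∧ a e x + r e ≤ 0 from
    ⟨(H _ hR.some_mem).1, fun x hx => (H x hx).2⟩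
  intro x hx
  obtain ⟨l, hl, hlP, -⟩ := exists_strongDual_nonpos_on_sigmaCone a r S hx y
    (δ := -Sᶜ.indicator 1) fun f hf => by simp [hf]
  have hposPart : (a e y + r e)⁺ = 0 := posPart_eq_zero.2 (he.2 hy)
  have hle := hl _ (h (rhoP_mem_sigmaCone he))
  rw [hlP, hposPart, sub_zero, Pi.neg_apply, sub_neg_eq_add,
    add_indicator_compl_nonpos_iff (posPart_nonneg _), posPart_eq_zero] at hle
  exact hle

theorem negSet_subset_of_sigmaCone_subset (hR : R.Nonempty) (hR' : R'.Nonempty)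
    (h : sigmaCone a r S' R' ⊆ sigmaCone a r S R) : negSet a r S' R' ⊆ negSet a r S R := by
  intro e he
  obtain ⟨y, hy⟩ := hR'
  suffices H : ∀ x ∈ R, e ∈ S ∧ 0 ≤ a e x + r e from
    ⟨(H _ hR.some_mem).1, fun x hx => (H x hx).2⟩
  intro x hx
  obtain ⟨l, hl, -, hlM⟩ := exists_strongDual_nonpos_on_sigmaCone a r S hx y
    (δ := -Sᶜ.indicator 1) fun f hf => by simp [hf]
  have hnegPart : (a e y + r e)⁻ = 0 := negPart_eq_zero.2 (he.2 hy)
  have hle := hl _ (h (rhoM_mem_sigmaCone he))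
  rw [hlM, hnegPart, sub_zero, Pi.neg_apply, sub_neg_eq_add,
    add_indicator_compl_nonpos_iff (negPart_nonneg _), negPart_eq_zero] at hle
  exact hle

theorem IsFace.exists_strongDual_eq_zero_iff (hR' : IsFace a r S' R') (hR : R.Nonempty) :
    ∃ l : StrongDual ℝ (tildeN a), (∀ v ∈ sigmaCone a r S R, l v ≤ 0) ∧
      (∀ e ∈ posSet a r S R, l (rhoP a e) = 0 ↔ e ∈ posSet a r S' R') ∧
      ∀ e ∈ negSet a r S R, l (rhoM a e) = 0 ↔ e ∈ negSet a r S' R' := by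
  obtain ⟨x, hx⟩ := hR
  obtain ⟨y, hy⟩ := hR'.nonempty
  obtain ⟨l, hl, hlP, hlM⟩ := exists_strongDual_nonpos_on_sigmaCone a r S hx y
    (δ := S'ᶜ.indicator 1) fun f _ => indicator_nonneg (fun _ _ => zero_le_one) f
  refine ⟨l, hl, fun e he => ?_, fun e he => ?_⟩
  · rw [← (hl _ (rhoP_mem_sigmaCone he)).ge_iff_eq, hlP, posPart_eq_zero.2 (he.2 hx),
      zero_sub, ← neg_add', neg_nonneg, add_indicator_compl_nonpos_iff (posPart_nonneg _),
      posPart_eq_zero, hR'.mem_posSet_iff hy]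
  · rw [← (hl _ (rhoM_mem_sigmaCone he)).ge_iff_eq, hlM, negPart_eq_zero.2 (he.2 hx),
      zero_sub, ← neg_add', neg_nonneg, add_indicator_compl_nonpos_iff (negPart_nonneg _),
      negPart_eq_zero, hR'.mem_negSet_iff hy]

theorem IsFace.isExposed_sigmaCone (hR' : IsFace a r S' R') (hR : R.Nonempty)
    (hpos : posSet a r S' R' ⊆ posSet a r S R) (hneg : negSet a r S' R' ⊆ negSet a r S R) :
    IsExposed ℝ (sigmaCone a r S R) (sigmaCone a r S' R') := by
  obtain ⟨l, hl, hlP, hlM⟩ := hR'.exists_strongDual_eq_zero_iff (S := S) hR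
  have hgenerators : rhoP a '' posSet a r S' R' ∪ rhoM a '' negSet a r S' R' =
      {v ∈ rhoP a '' posSet a r S R ∪ rhoM a '' negSet a r S R | l v = 0} := by
    ext v
    constructor
    · rintro (⟨e, he, rfl⟩ | ⟨e, he, rfl⟩)
      · exact ⟨Or.inl (mem_image_of_mem _ (hpos he)), (hlP e (hpos he)).2 he⟩
      · exact ⟨Or.inr (mem_image_of_mem _ (hneg he)), (hlM e (hneg he)).2 he⟩
    · rintro ⟨⟨e, he, rfl⟩ | ⟨e, he, rfl⟩, hle⟩
      · exact Or.inl (mem_image_of_mem _ ((hlP e he).1 hle))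
      · exact Or.inr (mem_image_of_mem _ ((hlM e he).1 hle))
  rw [sigmaCone_eq_hull] at hl
  rw [sigmaCone_eq_hull, sigmaCone_eq_hull, hgenerators]
  exact isExposed_hull_sep_eq_zero fun v hv => hl v (PointedCone.subset_hull hv)

theorem sigmaCone_isExposed_iff_general (ha : ∀ e, Continuous (a e)) (hR : R.Nonempty)
    (hR' : IsFace a r S' R') :
    ((sigmaCone a r S' R').Nonempty ∧
        IsExposed ℝ (sigmaCone a r S R) (sigmaCone a r S' R')) ↔
      S' ⊆ S ∧ R ⊆ closure R' := by
  rw [hR'.subset_and_subset_closure_iff ha]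
  constructor
  · rintro ⟨-, hexposed⟩
    exact ⟨posSet_subset_of_sigmaCone_subset hR hR'.nonempty hexposed.subset,
      negSet_subset_of_sigmaCone_subset hR hR'.nonempty hexposed.subset⟩
  · rintro ⟨hpos, hneg⟩
    exact ⟨⟨0, zero_mem_sigmaCone⟩, hR'.isExposed_sigmaCone hR hpos hneg⟩

end Cones

end Arrangement

/-- Face-relation part of Proposition 4.1: `σ_{S',R'}` is a nonempty exposed face of
`σ_{S,R}` iff `S' ⊆ S` and `R ⊆ closure R'`. -/
theorem sigmaCone_isExposed_iff
    (a : E → (M →ₗ[ℝ] ℝ)) (r : E → ℝ)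
    (ha : ∀ e, a e ≠ 0) (hspan : Submodule.span ℝ (Set.range a) = ⊤)
    (S S' : Set E) (R R' : Set M)
    (hR : IsFace a r S R) (hR' : IsFace a r S' R') :
    ((sigmaCone a r S' R').Nonempty ∧
        IsExposed ℝ (sigmaCone a r S R) (sigmaCone a r S' R')) ↔
      S' ⊆ S ∧ R ⊆ closure R' :=
  sigmaCone_isExposed_iff_general (fun e => (a e).continuous_of_finiteDimensional) hR.nonempty hR'

end
end

section
/- Let F ⊆ E be a flat, R a face of 𝒜_F, and 𝒻 : F = F_0 ⊊ F_1 ⊊ ⋯ ⊊ F_k = E a flag of flats based at F. Let S ⊆ E with F ⊆ S and let R' be a face of 𝒜_S contained in the topological closure of R. Then the cone C^{(F,R)}_𝒻 meets the intrinsic (relative) interior of π_{F,R}(σ_{S,R'}) in W_{F,R} if and only if S ∈ {F_0, F_1, …, F_k}, i.e. S is a flat appearing in the flag 𝒻. (First part of Lemma 6.2.) -/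
open Set Submodule

noncomputable section

variable {E : Type*} [Fintype E] [DecidableEq E]
variable {M : Type*} [NormedAddCommGroup M] [NormedSpace ℝ M] [FiniteDimensional ℝ M]

/-- The addition map `(x, y) ↦ x + y` on `(E → ℝ) × (E → ℝ)`. -/
def addMap (E : Type*) [Fintype E] : ((E → ℝ) × (E → ℝ)) →ₗ[ℝ] (E → ℝ) :=
  LinearMap.fst ℝ (E → ℝ) (E → ℝ) + LinearMap.snd ℝ (E → ℝ) (E → ℝ)

lemma nabLam_le_ker_addMap (a : E → (M →ₗ[ℝ] ℝ)) :
    nabLam a ≤ LinearMap.ker (addMap E) := by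
  rintro v ⟨x, hx, rfl⟩
  simp [addMap, nabla]

/-- The map `Φ̄ : Ñ → (E → ℝ)` induced by `(x, y) ↦ x + y`; it satisfies
`Φ̄(ρ_e^+) = Φ̄(ρ_e^-) = δ_e`. -/
def Phibar (a : E → (M →ₗ[ℝ] ℝ)) : tildeN a →ₗ[ℝ] (E → ℝ) :=
  (nabLam a).liftQ (addMap E) (nabLam_le_ker_addMap a)

lemma Phibar_rhoP (a : E → (M →ₗ[ℝ] ℝ)) (e : E) :
    Phibar a (rhoP a e) = Pi.single e 1 := by
  simp [Phibar, rhoP, addMap]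

lemma Phibar_rhoM (a : E → (M →ₗ[ℝ] ℝ)) (e : E) :
    Phibar a (rhoM a e) = Pi.single e 1 := by
  simp [Phibar, rhoM, addMap]

/-- `ℝ^F`, the span of the coordinate vectors `δ_e` for `e ∈ F`. -/
def RF (E : Type*) [Fintype E] [DecidableEq E] (F : Set E) : Submodule ℝ (E → ℝ) :=
  Submodule.span ℝ ((fun e => Pi.single e (1 : ℝ)) '' F)

/-- The linear span of the cone `σ_{F,R}` in `Ñ`. -/
def spanSigma (a : E → (M →ₗ[ℝ] ℝ)) (r : E → ℝ) (F : Set E) (R : Set M) :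
    Submodule ℝ (tildeN a) :=
  Submodule.span ℝ (sigmaCone a r F R)

/-- `W_{F,R} = Ñ / span(σ_{F,R})`. -/
abbrev Wspace (a : E → (M →ₗ[ℝ] ℝ)) (r : E → ℝ) (F : Set E) (R : Set M) : Type _ :=
  tildeN a ⧸ spanSigma a r F R

/-- The quotient map `π_{F,R} : Ñ → W_{F,R}`. -/
def piFR (a : E → (M →ₗ[ℝ] ℝ)) (r : E → ℝ) (F : Set E) (R : Set M) :
    tildeN a →ₗ[ℝ] Wspace a r F R :=
  (spanSigma a r F R).mkQ

lemma spanSigma_le_ker (a : E → (M →ₗ[ℝ] ℝ)) (r : E → ℝ) (F : Set E) (R : Set M) :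
    spanSigma a r F R ≤ LinearMap.ker ((RF E F).mkQ ∘ₗ Phibar a) := by
  rw [spanSigma, Submodule.span_le]
  rintro v ⟨c, d, hc, hd, rfl⟩
  simp only [SetLike.mem_coe, LinearMap.mem_ker, LinearMap.comp_apply]
  rw [Submodule.mkQ_apply, Submodule.Quotient.mk_eq_zero, map_add, map_sum, map_sum]
  simp only [map_smul]
  apply Submodule.add_mem
  · apply Submodule.sum_mem
    intro e _
    by_cases he : e ∈ posSet a r F R
    · rw [Set.indicator_of_mem he]
      exact Submodule.smul_mem _ _
        (by rw [Phibar_rhoP]; exact Submodule.subset_span ⟨e, he.1, rfl⟩)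
    · rw [Set.indicator_of_notMem he, zero_smul]
      exact Submodule.zero_mem _
  · apply Submodule.sum_mem
    intro e _
    by_cases he : e ∈ negSet a r F R
    · rw [Set.indicator_of_mem he]
      exact Submodule.smul_mem _ _
        (by rw [Phibar_rhoM]; exact Submodule.subset_span ⟨e, he.1, rfl⟩)
    · rw [Set.indicator_of_notMem he, zero_smul]
      exact Submodule.zero_mem _

/-- The induced surjection `Φ̄_{F,R} : W_{F,R} → (E → ℝ)/ℝ^F`. -/
def PhibarFR (a : E → (M →ₗ[ℝ] ℝ)) (r : E → ℝ) (F : Set E) (R : Set M) :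
    Wspace a r F R →ₗ[ℝ] ((E → ℝ) ⧸ RF E F) :=
  (spanSigma a r F R).liftQ ((RF E F).mkQ ∘ₗ Phibar a) (spanSigma_le_ker a r F R)

/-- `F ⊆ E` is a flat of the configuration `a`. -/
def IsFlat (a : E → (M →ₗ[ℝ] ℝ)) (F : Set E) : Prop :=
  F = {e : E | a e ∈ Submodule.span ℝ (a '' F)}

/-- The Bergman cone of a flag `𝒻 : F = F_0 ⊊ F_1 ⊊ ⋯ ⊊ F_k = E`:
`{c_1 δ_{F_1} + ⋯ + c_{k-1} δ_{F_{k-1}} + c δ_E : c_1, …, c_{k-1} ≥ 0, c ∈ ℝ} ⊆ ℝ^E`. -/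
def bergCone {E : Type*} [Fintype E] (k : ℕ) (flag : Fin (k + 1) → Set E) : Set (E → ℝ) :=
  {v | ∃ c : Fin (k + 1) → ℝ, c 0 = 0 ∧ (∀ i : Fin (k + 1), 0 < i.val → i.val < k → 0 ≤ c i) ∧
    v = ∑ i : Fin (k + 1), c i • (flag i).indicator (1 : E → ℝ)}

/-- The cone `C^{(F,R)}_𝒻 = Φ̄_{F,R}⁻¹(β_𝒻) ⊆ W_{F,R}` of `Trop(𝔐_𝒜)`, where
`β_𝒻 ⊆ (E → ℝ)/ℝ^F` is the image of the Bergman cone of the flag `𝒻`. -/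
def Ccone (a : E → (M →ₗ[ℝ] ℝ)) (r : E → ℝ) (F : Set E) (R : Set M)
    (k : ℕ) (flag : Fin (k + 1) → Set E) : Set (Wspace a r F R) :=
  PhibarFR a r F R ⁻¹' ((RF E F).mkQ '' bergCone k flag)

/-!
A class `[u]` in `(E → ℝ)/ℝ^F` is the image under `Φ̄_{F,R}` of a point in the relative interior of
`π_{F,R}(σ_{S,R'})` exactly when `u` is positive on `S \ F` and zero off `S`. Indeed, no hyperplane
`H_e` with `e ∈ S` separates `R'`, so each such `e` contributes at least one of `ρ_e^±` to the
generators; these both map to `δ_e`, and the relative interior consists of the images of the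
combinations with all coefficients positive. On the other hand, off `F_0` the coordinates of
`∑ c_i δ_{F_i}` decrease weakly along the flag and drop to zero only when leaving some `F_j`, so the
support of a Bergman vector with these signs is one of the `F_j`; conversely `δ_{F_j}` has
support `F_j`.
-/

section IntrinsicInterior

open Topology

theorem image_interior_subset_intrinsicInterior_image {𝕜 V W : Type*}
    [NontriviallyNormedField 𝕜] [CompleteSpace 𝕜]
    [AddCommGroup V] [Module 𝕜 V] [TopologicalSpace V] [IsTopologicalAddGroup V]
    [ContinuousSMul 𝕜 V]
    [AddCommGroup W] [Module 𝕜 W] [TopologicalSpace W] [IsTopologicalAddGroup W]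
    [ContinuousSMul 𝕜 W] [T2Space W] [FiniteDimensional 𝕜 W]
    (L : V →ₗ[𝕜] W) (s : Set V) :
    L '' interior s ⊆ intrinsicInterior 𝕜 (L '' s) := by
  have span_le_range : affineSpan 𝕜 (L '' s) ≤ (LinearMap.range L).toAffineSubspace :=
    affineSpan_le.2 (image_subset_range L s)
  let incl : affineSpan 𝕜 (L '' s) → LinearMap.range L := fun y => ⟨y, span_le_range y.2⟩
  have incl_continuous : Continuous incl := continuous_subtype_val.subtype_mk _
  have rangeRestrict_isOpenMap : IsOpenMap L.rangeRestrict :=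
    L.rangeRestrict.isOpenMap_of_finiteDimensional L.surjective_rangeRestrict
  rintro _ ⟨x, hx, rfl⟩
  refine ⟨⟨L x, subset_affineSpan 𝕜 _ (mem_image_of_mem L (interior_subset hx))⟩,
    mem_interior.2 ⟨incl ⁻¹' (L.rangeRestrict '' interior s), ?_,
      (rangeRestrict_isOpenMap _ isOpen_interior).preimage incl_continuous, x, hx, rfl⟩, rfl⟩
  rintro y ⟨z, hz, hzy⟩
  exact ⟨z, interior_subset hz, congrArg Subtype.val hzy⟩

variable {V P : Type*} [AddCommGroup V] [Module ℝ V] [TopologicalSpace V] [ContinuousSMul ℝ V]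
  [TopologicalSpace P] [AddTorsor V P] [IsTopologicalAddTorsor P] {s : Set P} {x y : P}

theorem eventually_lineMap_mem_of_mem_intrinsicInterior (hx : x ∈ intrinsicInterior ℝ s)
    (hy : y ∈ affineSpan ℝ s) : ∀ᶠ t in 𝓝 (0 : ℝ), AffineMap.lineMap x y t ∈ s := by
  obtain ⟨x, hx, rfl⟩ := hx
  let line : ℝ → affineSpan ℝ s := fun t =>
    ⟨AffineMap.lineMap (x : P) y t, AffineMap.lineMap_mem t x.2 hy⟩
  have line_continuous : Continuous line := AffineMap.lineMap_continuous.subtype_mk _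
  have line_zero : line 0 = x := Subtype.ext (AffineMap.lineMap_apply_zero _ _)
  exact line_continuous.continuousAt.eventually
    (line_zero ▸ mem_interior_iff_mem_nhds.1 hx)

theorem pos_of_mem_intrinsicInterior (f : P →ᵃ[ℝ] ℝ) (hf : ∀ z ∈ s, 0 ≤ f z)
    (hx : x ∈ intrinsicInterior ℝ s) (hy : y ∈ s) (hfy : 0 < f y) : 0 < f x := by
  -- Prolong the segment from `y` to `x` slightly beyond `x`.
  have prolong := eventually_lineMap_mem_of_mem_intrinsicInterior hx (subset_affineSpan ℝ s hy)
  obtain ⟨t, hts, ht : t < 0⟩ :=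
    ((prolong.filter_mono nhdsWithin_le_nhds).and (self_mem_nhdsWithin (s := Iio 0))).exists
  have nonneg : 0 ≤ t * (f y - f x) + f x := by
    simpa [AffineMap.apply_lineMap, AffineMap.lineMap_apply_ring'] using hf _ hts
  by_contra! hfx
  nlinarith

end IntrinsicInterior

instance t2Space_quotient_of_finiteDimensional {𝕜 V : Type*}
    [NontriviallyNormedField 𝕜] [CompleteSpace 𝕜]
    [AddCommGroup V] [Module 𝕜 V] [TopologicalSpace V] [IsTopologicalAddGroup V]
    [ContinuousSMul 𝕜 V] [T2Space V] (p : Submodule 𝕜 V) [FiniteDimensional 𝕜 p] :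
    T2Space (V ⧸ p) :=
  have : IsClosed (p : Set V) := p.closed_of_finiteDimensional
  inferInstance

section PositiveSupport

variable {ι : Type*}

/-- `S` is the positive support of `u` modulo `ℝ^F`. The values of `u` on `F` are ignored, so for
`F ⊆ S` this is a condition on the class of `u` in `(ι → ℝ) / ℝ^F`. -/
structure IsPosSupportMod (F S : Set ι) (u : ι → ℝ) : Prop where
  pos : ∀ e ∈ S \ F, 0 < u e
  eq_zero : ∀ e ∉ S, u e = 0

theorem exists_pos_indicator_add_indicator_eq {P Q : Set ι} {u : ι → ℝ}
    (hpos : ∀ e ∈ P ∪ Q, 0 < u e) (hzero : ∀ e ∉ P ∪ Q, u e = 0) :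
    ∃ c d : ι → ℝ, (∀ e, 0 < c e) ∧ (∀ e, 0 < d e) ∧ P.indicator c + Q.indicator d = u := by
  have pointwise (e : ι) : ∃ c d : ℝ, 0 < c ∧ 0 < d ∧
      P.indicator (fun _ => c) e + Q.indicator (fun _ => d) e = u e := by
    by_cases hP : e ∈ P <;> by_cases hQ : e ∈ Q
    · have hu := hpos e (.inl hP)
      exact ⟨u e / 2, u e / 2, half_pos hu, half_pos hu, by simp [hP, hQ]⟩
    · exact ⟨u e, 1, hpos e (.inl hP), one_pos, by simp [hP, hQ]⟩
    · exact ⟨1, u e, one_pos, hpos e (.inr hQ), by simp [hP, hQ]⟩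
    · exact ⟨1, 1, one_pos, one_pos, by simp [hP, hQ, hzero e (not_or.2 ⟨hP, hQ⟩)]⟩
  choose c d hc hd hcd using pointwise
  exact ⟨c, d, hc, hd, funext hcd⟩

end PositiveSupport

section BergmanCone

variable {ι : Type*} [Fintype ι] {k : ℕ} {flag : Fin (k + 1) → Set ι}

theorem zero_mem_bergCone : (0 : ι → ℝ) ∈ bergCone k flag :=
  ⟨0, rfl, fun _ _ _ => le_rfl, by simp⟩

theorem indicator_mem_bergCone {j : Fin (k + 1)} (hj : j ≠ 0) :
    (flag j).indicator 1 ∈ bergCone k flag :=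
  ⟨Pi.single j 1, Pi.single_eq_of_ne hj.symm _,
    fun i _ _ => (Pi.single_nonneg.2 zero_le_one : (0 : Fin (k + 1) → ℝ) ≤ _) i,
    by simp [Pi.single_apply]⟩

theorem apply_le_apply_of_mem_bergCone {u : ι → ℝ} (hu : u ∈ bergCone k flag)
    (hlast : flag (Fin.last k) = univ) {e f : ι} (hfe : ∀ i, f ∈ flag i → e ∈ flag i) :
    u f ≤ u e := by
  obtain ⟨c, hc0, hc, rfl⟩ := hu
  simp only [Finset.sum_apply, Pi.smul_apply, smul_eq_mul]
  refine Finset.sum_le_sum fun i _ => ?_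
  by_cases hf : f ∈ flag i
  · simp [hf, hfe i hf]
  · have hik : i ≠ Fin.last k := by
      rintro rfl
      simp [hlast] at hf
    have hci : 0 ≤ c i := by
      rcases eq_or_ne i 0 with rfl | hi
      · exact hc0.ge
      · exact hc i (Fin.pos_iff_ne_zero.2 hi) (Fin.val_lt_last hik)
    rw [indicator_of_notMem hf, mul_zero]
    exact mul_nonneg hci (indicator_nonneg (fun _ _ => zero_le_one) e)

theorem exists_isPosSupportMod_bergCone_iff (hmono : Monotone flag)
    (hlast : flag (Fin.last k) = univ) {S : Set ι} (hFS : flag 0 ⊆ S) :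
    (∃ u ∈ bergCone k flag, IsPosSupportMod (flag 0) S u) ↔ ∃ j, S = flag j := by
  constructor
  · rintro ⟨u, hu, hpos, hzero⟩
    obtain ⟨j, hSj, hmin⟩ :=
      wellFounded_lt.has_min {j | S ⊆ flag j} ⟨Fin.last k, by simp [hlast]⟩
    refine ⟨j, hSj.antisymm ?_⟩
    rcases Fin.eq_zero_or_eq_succ j with rfl | ⟨i, rfl⟩
    · exact hFS
    · obtain ⟨f, hfS, hfi⟩ := not_subset.1 fun h => hmin i.castSucc h Fin.castSucc_lt_succ
      intro e he
      by_contra heS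
      have hfe (l : Fin (k + 1)) (hfl : f ∈ flag l) : e ∈ flag l := by
        have hil : i.castSucc < l := lt_of_not_ge fun hli => hfi (hmono hli hfl)
        exact hmono (Fin.castSucc_lt_iff_succ_le.1 hil) he
      have hf : 0 < u f := hpos f ⟨hfS, fun hf0 => hfi (hmono (Fin.zero_le _) hf0)⟩
      exact (hf.trans_le (apply_le_apply_of_mem_bergCone hu hlast hfe)).ne' (hzero e heS)
  · rintro ⟨j, rfl⟩
    rcases eq_or_ne j 0 with rfl | hj
    · exact ⟨0, zero_mem_bergCone, by simp, fun _ _ => rfl⟩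
    · exact ⟨_, indicator_mem_bergCone hj, fun e he => by simp [he.1], fun e he => by simp [he]⟩

end BergmanCone

section Faces

omit [Fintype E] [DecidableEq E] [FiniteDimensional ℝ M]

theorem IsFace.subset_Hplus_or_subset_Hminus {a : E → (M →ₗ[ℝ] ℝ)} {r : E → ℝ} {S : Set E}
    {R : Set M} (hR : IsFace a r S R) {e : E} (he : e ∈ S) :
    R ⊆ Hplus a r e ∨ R ⊆ Hminus a r e := by
  obtain ⟨m₀, rfl⟩ := hR
  refine (le_total (a e m₀ + r e) 0).imp (fun h m hm => ?_) (fun h m hm => ?_)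
  · exact sign_nonpos_iff.1 (hm e he ▸ sign_nonpos_iff.2 h)
  · exact sign_nonneg_iff.1 (hm e he ▸ sign_nonneg_iff.2 h)

theorem posSet_union_negSet {a : E → (M →ₗ[ℝ] ℝ)} {r : E → ℝ} {S : Set E} {R : Set M}
    (hR : ∀ e ∈ S, R ⊆ Hplus a r e ∨ R ⊆ Hminus a r e) :
    posSet a r S R ∪ negSet a r S R = S := by
  ext e
  exact ⟨fun h => h.elim And.left And.left, fun he => (hR e he).imp (.intro he) (.intro he)⟩

end Faces

section SigmaCone

variable (a : E → (M →ₗ[ℝ] ℝ)) (r : E → ℝ) (S : Set E) (R : Set M)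

/-- The parametrization `(c, d) ↦ ∑_{e ∈ S^+(R)} c_e ρ_e^+ + ∑_{e ∈ S^-(R)} d_e ρ_e^-`, which maps
the nonnegative orthant onto `σ_{S,R}`. All of `E` indexes the coordinates, so that the orthant has
nonempty interior; the superfluous ones are sent to `0`. -/
def sigmaParam : (E → ℝ) × (E → ℝ) →ₗ[ℝ] tildeN a :=
  (Fintype.linearCombination ℝ ((posSet a r S R).indicator (rhoP a))).coprod
    (Fintype.linearCombination ℝ ((negSet a r S R).indicator (rhoM a)))

omit [FiniteDimensional ℝ M] in
theorem sigmaParam_apply (c d : E → ℝ) :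
    sigmaParam a r S R (c, d) = ∑ e, (posSet a r S R).indicator c e • rhoP a e
      + ∑ e, (negSet a r S R).indicator d e • rhoM a e := by
  simp [sigmaParam, Fintype.linearCombination_apply, ← indicator_smul_apply,
    indicator_smul_apply_left]

omit [FiniteDimensional ℝ M] in
theorem sigmaCone_eq_image_Ici : sigmaCone a r S R = sigmaParam a r S R '' Ici 0 := by
  ext v
  constructor
  · rintro ⟨c, d, hc, hd, rfl⟩
    exact ⟨(c, d), ⟨hc, hd⟩, sigmaParam_apply a r S R c d⟩
  · rintro ⟨⟨c, d⟩, ⟨hc, hd⟩, rfl⟩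
    exact ⟨c, d, hc, hd, sigmaParam_apply a r S R c d⟩

theorem Phibar_sigmaParam (c d : E → ℝ) :
    Phibar a (sigmaParam a r S R (c, d))
      = (posSet a r S R).indicator c + (negSet a r S R).indicator d := by
  ext f
  simp [sigmaParam_apply, Phibar_rhoP, Phibar_rhoM, Pi.single_apply]

variable {a r S R}

theorem Phibar_nonneg_of_mem_sigmaCone {v : tildeN a} (hv : v ∈ sigmaCone a r S R) :
    0 ≤ Phibar a v := by
  rw [sigmaCone_eq_image_Ici] at hv
  obtain ⟨⟨c, d⟩, ⟨hc, hd⟩, rfl⟩ := hv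
  rw [Phibar_sigmaParam]
  exact add_nonneg (indicator_nonneg fun e _ => hc e) (indicator_nonneg fun e _ => hd e)

theorem Phibar_apply_eq_zero_of_mem_sigmaCone {v : tildeN a} (hv : v ∈ sigmaCone a r S R) {e : E}
    (he : e ∉ S) : Phibar a v e = 0 := by
  rw [sigmaCone_eq_image_Ici] at hv
  obtain ⟨⟨c, d⟩, -, rfl⟩ := hv
  simp [Phibar_sigmaParam, posSet, negSet, he]

theorem exists_pos_Phibar_sigmaParam_eq (hR : ∀ e ∈ S, R ⊆ Hplus a r e ∨ R ⊆ Hminus a r e)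
    {u : E → ℝ} (hpos : ∀ e ∈ S, 0 < u e) (hzero : ∀ e ∉ S, u e = 0) :
    ∃ c d : E → ℝ, (∀ e, 0 < c e) ∧ (∀ e, 0 < d e) ∧ Phibar a (sigmaParam a r S R (c, d)) = u := by
  rw [← posSet_union_negSet hR] at hpos hzero
  simpa only [Phibar_sigmaParam] using exists_pos_indicator_add_indicator_eq hpos hzero

omit [FiniteDimensional ℝ M] in
theorem map_sigmaParam_mem_intrinsicInterior {W : Type*} [AddCommGroup W] [Module ℝ W]
    [TopologicalSpace W] [IsTopologicalAddGroup W] [ContinuousSMul ℝ W] [T2Space W]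
    [FiniteDimensional ℝ W] (L : tildeN a →ₗ[ℝ] W) {c d : E → ℝ} (hc : ∀ e, 0 < c e)
    (hd : ∀ e, 0 < d e) :
    L (sigmaParam a r S R (c, d)) ∈ intrinsicInterior ℝ (L '' sigmaCone a r S R) := by
  have hcd : (c, d) ∈ interior (Ici (0 : (E → ℝ) × (E → ℝ))) := by
    rw [mem_interior_iff_mem_nhds, ← Prod.mk_zero_zero, ← Ici_prod_Ici]
    exact prod_mem_nhds (pi_Ici_mem_nhds hc) (pi_Ici_mem_nhds hd)
  rw [sigmaCone_eq_image_Ici, ← image_comp]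
  exact image_interior_subset_intrinsicInterior_image (L ∘ₗ sigmaParam a r S R) _ ⟨_, hcd, rfl⟩

end SigmaCone

section Quotient

theorem mem_RF {F : Set E} {u : E → ℝ} : u ∈ RF E F ↔ ∀ e ∉ F, u e = 0 := by
  simp [← Pi.mem_spanSubset_iff, RF, Pi.spanSubset]

theorem RF_le_ker_proj {F : Set E} {e : E} (he : e ∉ F) :
    RF E F ≤ LinearMap.ker (LinearMap.proj e : (E → ℝ) →ₗ[ℝ] ℝ) :=
  fun _ hu => mem_RF.1 hu e he

theorem mkQ_RF_eq_iff {F : Set E} {u v : E → ℝ} :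
    (RF E F).mkQ u = (RF E F).mkQ v ↔ ∀ e ∉ F, u e = v e := by
  simp [Submodule.Quotient.eq, mem_RF, sub_eq_zero]

variable (a : E → (M →ₗ[ℝ] ℝ)) (r : E → ℝ) (F : Set E) (R : Set M)

theorem PhibarFR_piFR (v : tildeN a) :
    PhibarFR a r F R (piFR a r F R v) = (RF E F).mkQ (Phibar a v) := rfl

/-- The `e`-th coordinate of `Φ̄_{F,R}`, well defined on `(E → ℝ)/ℝ^F` since `e ∉ F`. -/
def PhibarFRCoord {e : E} (he : e ∉ F) : Wspace a r F R →ₗ[ℝ] ℝ :=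
  (RF E F).liftQ (LinearMap.proj e) (RF_le_ker_proj he) ∘ₗ PhibarFR a r F R

variable {a r F R}

theorem PhibarFRCoord_eq {e : E} (he : e ∉ F) {x : Wspace a r F R} {u : E → ℝ}
    (hx : PhibarFR a r F R x = (RF E F).mkQ u) : PhibarFRCoord a r F R he x = u e := by
  simp [PhibarFRCoord, hx]

variable {S : Set E} {R' : Set M}

theorem isPosSupportMod_of_mem_intrinsicInterior
    (hR' : ∀ e ∈ S, R' ⊆ Hplus a r e ∨ R' ⊆ Hminus a r e) (hFS : F ⊆ S) {x : Wspace a r F R}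
    (hx : x ∈ intrinsicInterior ℝ (piFR a r F R '' sigmaCone a r S R')) {u : E → ℝ}
    (hxu : PhibarFR a r F R x = (RF E F).mkQ u) : IsPosSupportMod F S u := by
  refine ⟨fun e ⟨heS, heF⟩ => ?_, fun e heS => ?_⟩
  · obtain ⟨c, d, hc, hd, hcd⟩ := exists_pos_Phibar_sigmaParam_eq (u := S.indicator 1) hR'
      (by simp +contextual) (by simp +contextual)
    have coord_nonneg : ∀ z ∈ piFR a r F R '' sigmaCone a r S R',
        0 ≤ PhibarFRCoord a r F R heF z := by
      rintro _ ⟨v, hv, rfl⟩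
      rw [PhibarFRCoord_eq heF (PhibarFR_piFR a r F R v)]
      exact Phibar_nonneg_of_mem_sigmaCone hv e
    rw [← PhibarFRCoord_eq heF hxu]
    refine pos_of_mem_intrinsicInterior (PhibarFRCoord a r F R heF).toAffineMap coord_nonneg hx
      (intrinsicInterior_subset (map_sigmaParam_mem_intrinsicInterior _ hc hd)) ?_
    rw [LinearMap.coe_toAffineMap, PhibarFRCoord_eq heF (PhibarFR_piFR a r F R _), hcd]
    simp [heS]
  · obtain ⟨v, hv, rfl⟩ := intrinsicInterior_subset hx
    rw [← mkQ_RF_eq_iff.1 hxu e (mt (@hFS e) heS)]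
    exact Phibar_apply_eq_zero_of_mem_sigmaCone hv heS

open Classical in
theorem IsPosSupportMod.exists_mem_intrinsicInterior
    (hR' : ∀ e ∈ S, R' ⊆ Hplus a r e ∨ R' ⊆ Hminus a r e) (hFS : F ⊆ S) {u : E → ℝ}
    (hu : IsPosSupportMod F S u) :
    ∃ x ∈ intrinsicInterior ℝ (piFR a r F R '' sigmaCone a r S R'),
      PhibarFR a r F R x = (RF E F).mkQ u := by
  obtain ⟨c, d, hc, hd, hcd⟩ := exists_pos_Phibar_sigmaParam_eq (u := F.piecewise 1 u) hR'
    (fun e he => by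
      by_cases heF : e ∈ F
      · simp [heF]
      · simpa [heF] using hu.pos e ⟨he, heF⟩)
    (fun e he => by simpa [mt (@hFS e) he] using hu.eq_zero e he)
  refine ⟨_, map_sigmaParam_mem_intrinsicInterior (piFR a r F R) hc hd, ?_⟩
  rw [PhibarFR_piFR, hcd, mkQ_RF_eq_iff]
  exact fun e he => piecewise_eq_of_notMem F _ _ he

theorem mkQ_mem_PhibarFR_image_intrinsicInterior_iff
    (hR' : ∀ e ∈ S, R' ⊆ Hplus a r e ∨ R' ⊆ Hminus a r e) (hFS : F ⊆ S) {u : E → ℝ} :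
    (RF E F).mkQ u ∈
        PhibarFR a r F R '' intrinsicInterior ℝ (piFR a r F R '' sigmaCone a r S R') ↔
      IsPosSupportMod F S u :=
  ⟨fun ⟨_, hx, hxu⟩ => isPosSupportMod_of_mem_intrinsicInterior hR' hFS hx hxu,
    fun hu => hu.exists_mem_intrinsicInterior hR' hFS⟩

end Quotient

theorem Ccone_meets_relint_iff_general (a : E → (M →ₗ[ℝ] ℝ)) (r : E → ℝ) (R : Set M)
    {k : ℕ} {flag : Fin (k + 1) → Set E} (hmono : Monotone flag)
    (hlast : flag (Fin.last k) = univ) {S : Set E} (hFS : flag 0 ⊆ S) {R' : Set M}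
    (hR' : ∀ e ∈ S, R' ⊆ Hplus a r e ∨ R' ⊆ Hminus a r e) :
    (Ccone a r (flag 0) R k flag ∩
        intrinsicInterior ℝ (piFR a r (flag 0) R '' sigmaCone a r S R')).Nonempty ↔
      ∃ j, S = flag j := by
  calc
    _ ↔ ∃ u ∈ bergCone k flag, (RF E (flag 0)).mkQ u ∈ PhibarFR a r (flag 0) R ''
          intrinsicInterior ℝ (piFR a r (flag 0) R '' sigmaCone a r S R') := by
      rw [Ccone, inter_comm, ← image_inter_nonempty_iff, inter_comm, image_inter_nonempty_iff]
      rfl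
    _ ↔ ∃ u ∈ bergCone k flag, IsPosSupportMod (flag 0) S u :=
      exists_congr fun _ => and_congr_right fun _ =>
        mkQ_mem_PhibarFR_image_intrinsicInterior_iff hR' hFS
    _ ↔ ∃ j, S = flag j := exists_isPosSupportMod_bergCone_iff hmono hlast hFS

/-- First part of Lemma 6.2: the cone `C^{(F,R)}_𝒻` meets the relative interior of
`π_{F,R}(σ_{S,R'})` iff `S` is a flat appearing in the flag `𝒻`. -/
theorem Ccone_meets_relint_iff
    (a : E → (M →ₗ[ℝ] ℝ)) (r : E → ℝ)
    (ha : ∀ e, a e ≠ 0) (hspan : Submodule.span ℝ (Set.range a) = ⊤)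
    (F : Set E) (hF : IsFlat a F) (R : Set M) (hR : IsFace a r F R)
    (k : ℕ) (flag : Fin (k + 1) → Set E)
    (hflat : ∀ i, IsFlat a (flag i)) (hmono : StrictMono flag)
    (h0 : flag 0 = F) (hlast : flag (Fin.last k) = Set.univ)
    (S : Set E) (hFS : F ⊆ S) (R' : Set M) (hR' : IsFace a r S R')
    (hsub : R' ⊆ closure R) :
    (Ccone a r F R k flag ∩
        intrinsicInterior ℝ (piFR a r F R '' sigmaCone a r S R')).Nonempty ↔
      ∃ j : Fin (k + 1), S = flag j := by
  subst h0
  exact Ccone_meets_relint_iff_general a r R hmono.monotone hlast hFS fun _ =>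
    hR'.subset_Hplus_or_subset_Hminus

end
end
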